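/- arXiv:2306.04483 — 2 statements merged into one kernel-verified Lean document; each statement's English description precedes it below -/
import Mathlib

section
/- Let d ≥ 1 and let φ ∈ Φ_d have a strictly positive nonincreasing d-radial spectral density f_d. Let a₁ ≥ a₂ > 0 and b₁, b₂ ≥ 0. Then the function h ↦ b₁ φ(√a₁ ‖h‖) − b₂ φ(√a₂ ‖h‖) is a stationary covariance function on ℝ^d if and only if b₁ ≥ b₂ (a₁/a₂)^{d/2}. -/
open MeasureTheory
open scoped BigOperators RealInnerProductSpace

noncomputable section

/-- A function `C : ℝ^d → ℝ` is a stationary covariance function if it is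
positive semidefinite. -/
def IsStationaryCovariance (d : ℕ) (C : EuclideanSpace ℝ (Fin d) → ℝ) : Prop :=
  ∀ (n : ℕ) (x : Fin n → EuclideanSpace ℝ (Fin d)) (v : Fin n → ℝ),
    0 ≤ ∑ i, ∑ j, v i * v j * C (x i - x j)

/-- `φ : [0,∞) → ℝ` belongs to the class `Φ_d`. -/
def MemPhi (d : ℕ) (φ : ℝ → ℝ) : Prop :=
  ContinuousOn φ (Set.Ici 0) ∧ IsStationaryCovariance d (fun h => φ ‖h‖)

/-- `f` is a `d`-radial spectral density of `φ`. -/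
def IsRadialSpectralDensity (d : ℕ) (φ f : ℝ → ℝ) : Prop :=
  (∀ u : ℝ, 0 ≤ u → 0 ≤ f u) ∧
  MeasureTheory.Integrable (fun ω : EuclideanSpace ℝ (Fin d) => f ‖ω‖) ∧
  ∀ h : EuclideanSpace ℝ (Fin d),
    (φ ‖h‖ : ℂ) = ∫ ω : EuclideanSpace ℝ (Fin d),
      Complex.exp (Complex.I * ((⟪h, ω⟫ : ℝ) : ℂ)) * ((f ‖ω‖ : ℝ) : ℂ)

/-- The quadratic form `hᵀ A h`. -/
def quadForm {d : ℕ} (A : Matrix (Fin d) (Fin d) ℝ) (h : EuclideanSpace ℝ (Fin d)) : ℝ :=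
  ∑ i, ∑ j, h i * A i j * h j


open Complex Filter Module ProbabilityTheory Topology

/-!
If `C` is the Fourier transform of an integrable `g`, then the quadratic form
`∑ i, ∑ j, v i * v j * C (x i - x j)` is the integral of
`‖∑ i, v i * exp (I * ⟪x i, ω⟫)‖ ^ 2 * g ω`, so `0 ≤ g` makes `C` positive semidefinite.
Conversely, for a positive semidefinite `C` and every probability measure `μ`, the integral of
`‖charFun μ ω‖ ^ 2 * g ω` equals that of `C (x - y)` over `μ × μ` and is therefore nonnegative;
letting `μ` be a centred Gaussian of growing variance shows that the value of `g` at `0`, where `g`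
is continuous up to null sets, is nonnegative.

For `C h = b₁ * φ (s₁ * ‖h‖) - b₂ * φ (s₂ * ‖h‖)` with `sᵢ = √aᵢ` the spectral density is
`b₁ * s₁⁻ᵈ * f (‖ω‖ / s₁) - b₂ * s₂⁻ᵈ * f (‖ω‖ / s₂)`. Since `f` is nonincreasing and `s₂ ≤ s₁`, it
is nonnegative as soon as `b₂ * s₂⁻ᵈ ≤ b₁ * s₁⁻ᵈ`; its limit at `0` is
`(b₁ * s₁⁻ᵈ - b₂ * s₂⁻ᵈ) * f(0+)` with `0 < f(0+)`, which makes this condition necessary.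
-/

section SampleMean

variable {X : Type*} [MeasurableSpace X] {μ : Measure X} [IsProbabilityMeasure μ] {K : X × X → ℝ}

lemma integral_pi_sum_sum {ι : Type*} [Fintype ι] (hK : Integrable K (μ.prod μ))
    (hdiag : Integrable (fun x => K (x, x)) μ) :
    ∫ x, ∑ i, ∑ j, K (x i, x j) ∂(Measure.pi fun _ : ι => μ) =
      Fintype.card ι * (∫ x, K (x, x) ∂μ + (Fintype.card ι - 1) * ∫ p, K p ∂μ.prod μ) := by
  classical
  rw [← Measure.infinitePi_eq_pi]
  set P := Measure.infinitePi fun _ : ι => μ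
  set D := ∫ x, K (x, x) ∂μ
  set M := ∫ p, K p ∂μ.prod μ
  have heval (i : ι) : MeasurePreserving (fun x => x i) P μ := measurePreserving_eval_infinitePi _ i
  have hpair {i j : ι} (hij : i ≠ j) : MeasurePreserving (fun x => (x i, x j)) P (μ.prod μ) :=
    ⟨by fun_prop, Measure.infinitePi_map_eval_prod hij⟩
  have hint (i j : ι) : Integrable (fun x => K (x i, x j)) P := by
    obtain rfl | hij := eq_or_ne i j
    · exact (heval i).integrable_comp_of_integrable hdiag
    · exact (hpair hij).integrable_comp_of_integrable hK
  have hval (i j : ι) : ∫ x, K (x i, x j) ∂P = (if i = j then D - M else 0) + M := by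
    split_ifs with hij
    · rw [hij, sub_add_cancel]
      exact (heval j).hasLaw.integral_comp hdiag.1
    · rw [zero_add]
      exact (hpair hij).hasLaw.integral_comp hK.1
  rw [integral_finsetSum _ fun i _ => integrable_finsetSum _ fun j _ => hint i j]
  simp_rw [integral_finsetSum _ fun j _ => hint _ j, hval, Finset.sum_add_distrib,
    Finset.sum_ite_eq, Finset.mem_univ, if_true, Finset.sum_const, Finset.card_univ, nsmul_eq_mul]
  ring

-- Averaging the double sum over `n` independent samples from `μ`, the off-diagonal terms dominate
-- as `n → ∞`.
lemma integral_prod_nonneg_of_sum_sum_nonneg (hK : Integrable K (μ.prod μ))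
    (hdiag : Integrable (fun x => K (x, x)) μ)
    (hnonneg : ∀ (n : ℕ) (x : Fin n → X), 0 ≤ ∑ i, ∑ j, K (x i, x j)) :
    0 ≤ ∫ p, K p ∂μ.prod μ := by
  have hmean (n : ℕ) : 0 ≤ ∫ x, K (x, x) ∂μ + n * ∫ p, K p ∂μ.prod μ := by
    have hsample : 0 ≤ ∫ x, ∑ i, ∑ j, K (x i, x j) ∂(Measure.pi fun _ : Fin (n + 1) => μ) :=
      integral_nonneg fun x => hnonneg (n + 1) x
    rw [integral_pi_sum_sum hK hdiag, Fintype.card_fin, Nat.cast_succ, add_sub_cancel_right]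
      at hsample
    exact nonneg_of_mul_nonneg_right hsample (by positivity)
  by_contra! hneg
  obtain ⟨n, hn⟩ := Archimedean.arch (∫ x, K (x, x) ∂μ) (neg_pos.2 hneg)
  have hsucc := hmean (n + 1)
  push_cast at hsucc
  rw [nsmul_eq_mul] at hn
  linarith

end SampleMean

lemma norm_exp_I_mul_ofReal_eq_one (r : ℝ) : ‖cexp (I * r)‖ = 1 := by
  rw [mul_comm, norm_exp_ofReal_mul_I]

lemma tendsto_norm_pow_mul_exp_neg_norm_sq_cobounded {E : Type*} [SeminormedAddGroup E] (n : ℕ) :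
    Tendsto (fun x : E => ‖x‖ ^ n * Real.exp (-‖x‖ ^ 2)) (Bornology.cobounded E) (𝓝 0) := by
  have hdecay : Tendsto (fun r : ℝ => r ^ n * Real.exp (-r ^ 2)) atTop (𝓝 0) := by
    have hlittleO := rpow_mul_exp_neg_mul_sq_isLittleO_exp_neg one_pos n
    simp only [Real.rpow_natCast, neg_mul, one_mul] at hlittleO
    exact hlittleO.trans_tendsto <| Real.tendsto_exp_neg_atTop_nhds_zero.comp <|
      tendsto_id.const_mul_atTop one_half_pos
  exact hdecay.comp tendsto_norm_cobounded_atTop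

section InnerProductSpace

variable {E : Type*} [NormedAddCommGroup E] [InnerProductSpace ℝ E]

lemma exp_I_mul_inner_sub (x y ω : E) :
    cexp (I * (⟪x - y, ω⟫ : ℝ)) =
      cexp (I * (⟪x, ω⟫ : ℝ)) * (starRingEnd ℂ) (cexp (I * (⟪y, ω⟫ : ℝ))) := by
  rw [← exp_conj, ← Complex.exp_add, map_mul, conj_I, conj_ofReal, inner_sub_left]
  push_cast
  ring_nf

lemma norm_sum_mul_exp_sq {ι : Type*} [Fintype ι] (x : ι → E) (v : ι → ℝ) (ω : E) :
    ((‖∑ i, (v i : ℂ) * cexp (I * (⟪x i, ω⟫ : ℝ))‖ ^ 2 : ℝ) : ℂ) =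
      ∑ i, ∑ j, (v i : ℂ) * v j * cexp (I * (⟪x i - x j, ω⟫ : ℝ)) := by
  rw [ofReal_pow, ← mul_conj', map_sum, Finset.sum_mul_sum]
  refine Finset.sum_congr rfl fun i _ => Finset.sum_congr rfl fun j _ => ?_
  rw [map_mul, conj_ofReal, exp_I_mul_inner_sub]
  ring

lemma integral_prod_exp_I_mul_inner_sub [MeasurableSpace E] (μ : Measure E) [SFinite μ] (ω : E) :
    ∫ p : E × E, cexp (I * (⟪p.1 - p.2, ω⟫ : ℝ)) ∂μ.prod μ = (‖charFun μ ω‖ ^ 2 : ℝ) := by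
  simp_rw [exp_I_mul_inner_sub]
  rw [integral_prod_mul (fun x => cexp (I * (⟪x, ω⟫ : ℝ)))
    (fun y => (starRingEnd ℂ) (cexp (I * (⟪y, ω⟫ : ℝ)))), integral_conj, mul_conj', ofReal_pow]
  simp_rw [mul_comm I, charFun_apply]

variable [FiniteDimensional ℝ E] [MeasurableSpace E] [BorelSpace E]

/-- `g` is a spectral density of `C`, i.e. an integrable function of which `C` is the Fourier
transform. In contrast to the spectral densities of covariance functions, `g` may change sign. -/
def HasSpectralDensity (C g : E → ℝ) : Prop :=
  Integrable g ∧ ∀ h, (C h : ℂ) = ∫ ω, cexp (I * (⟪h, ω⟫ : ℝ)) * (g ω : ℂ)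

namespace HasSpectralDensity

variable {C C₁ C₂ g g₁ g₂ : E → ℝ}

lemma integrable_exp_mul (H : HasSpectralDensity C g) (h : E) :
    Integrable fun ω => cexp (I * (⟪h, ω⟫ : ℝ)) * (g ω : ℂ) :=
  H.1.ofReal.bdd_mul (c := 1) (Continuous.aestronglyMeasurable (by fun_prop))
    (ae_of_all _ fun _ => (norm_exp_I_mul_ofReal_eq_one _).le)

lemma congr_ae (H : HasSpectralDensity C g₁) (hg : g₁ =ᵐ[volume] g₂) :
    HasSpectralDensity C g₂ :=
  ⟨H.1.congr hg, fun h => (H.2 h).trans <| integral_congr_ae <| by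
    filter_upwards [hg] with ω hω
    rw [hω]⟩

lemma const_mul (H : HasSpectralDensity C g) (b : ℝ) :
    HasSpectralDensity (fun h => b * C h) (fun ω => b * g ω) := by
  refine ⟨H.1.const_mul b, fun h => ?_⟩
  simp_rw [ofReal_mul, H.2 h, mul_left_comm _ (b : ℂ), integral_const_mul]

lemma sub (H₁ : HasSpectralDensity C₁ g₁) (H₂ : HasSpectralDensity C₂ g₂) :
    HasSpectralDensity (fun h => C₁ h - C₂ h) (fun ω => g₁ ω - g₂ ω) := by
  refine ⟨H₁.1.sub H₂.1, fun h => ?_⟩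
  simp_rw [ofReal_sub, mul_sub]
  rw [integral_sub (H₁.integrable_exp_mul h) (H₂.integrable_exp_mul h), H₁.2 h, H₂.2 h]

lemma comp_smul (H : HasSpectralDensity C g) {s : ℝ} (hs : s ≠ 0) :
    HasSpectralDensity (fun h => C (s • h)) (fun ω => |s ^ finrank ℝ E|⁻¹ * g (s⁻¹ • ω)) := by
  refine ⟨((integrable_comp_smul_iff _ g (inv_ne_zero hs)).2 H.1).const_mul _, fun h => ?_⟩
  have hscale : |s ^ finrank ℝ E| ≠ 0 := abs_ne_zero.2 (pow_ne_zero _ hs)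
  have hinner (ω : E) : ⟪s • h, s⁻¹ • ω⟫ = ⟪h, ω⟫ := by
    rw [real_inner_smul_left, real_inner_smul_right, mul_inv_cancel_left₀ hs]
  have hsubst := Measure.integral_comp_inv_smul volume
    (fun ω => cexp (I * (⟪s • h, ω⟫ : ℝ)) * (g ω : ℂ)) s
  simp_rw [hinner, ← H.2 (s • h)] at hsubst
  simp_rw [ofReal_mul, mul_left_comm _ ((|s ^ finrank ℝ E|⁻¹ : ℝ) : ℂ), integral_const_mul]
  rw [hsubst, real_smul, ← mul_assoc, ← ofReal_mul, inv_mul_cancel₀ hscale, ofReal_one, one_mul]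

lemma norm_le (H : HasSpectralDensity C g) (h : E) : ‖C h‖ ≤ ∫ ω, ‖g ω‖ := by
  rw [← norm_real, H.2 h]
  refine (norm_integral_le_integral_norm _).trans_eq ?_
  simp_rw [norm_mul, norm_exp_I_mul_ofReal_eq_one, one_mul, norm_real]

lemma continuous (H : HasSpectralDensity C g) : Continuous C := by
  have hC : Continuous fun h => (C h : ℂ) := by
    simp_rw [H.2]
    refine continuous_of_dominated (fun h => (H.integrable_exp_mul h).1) (fun h => ?_) H.1.norm ?_
    · refine ae_of_all _ fun ω => ?_
      rw [norm_mul, norm_exp_I_mul_ofReal_eq_one, one_mul, norm_real]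
    · exact ae_of_all _ fun ω => by fun_prop
  exact continuous_re.comp hC

lemma sum_sum_eq_integral (H : HasSpectralDensity C g) {ι : Type*} [Fintype ι]
    (x : ι → E) (v : ι → ℝ) :
    ∑ i, ∑ j, v i * v j * C (x i - x j) =
      ∫ ω, ‖∑ i, (v i : ℂ) * cexp (I * (⟪x i, ω⟫ : ℝ))‖ ^ 2 * g ω := by
  have hint (i j : ι) : Integrable fun ω =>
      (v i : ℂ) * v j * (cexp (I * (⟪x i - x j, ω⟫ : ℝ)) * (g ω : ℂ)) :=
    (H.integrable_exp_mul _).const_mul _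
  rw [← ofReal_inj, ← integral_complex_ofReal]
  simp_rw [ofReal_mul, norm_sum_mul_exp_sq, Finset.sum_mul, mul_assoc _ (cexp _)]
  rw [integral_finsetSum _ fun i _ => integrable_finsetSum _ fun j _ => hint i j]
  simp_rw [integral_finsetSum _ fun j _ => hint _ j, integral_const_mul, ← H.2]
  push_cast
  rfl

lemma sum_sum_nonneg (H : HasSpectralDensity C g) (hg : 0 ≤ g) {ι : Type*} [Fintype ι]
    (x : ι → E) (v : ι → ℝ) : 0 ≤ ∑ i, ∑ j, v i * v j * C (x i - x j) := by
  rw [H.sum_sum_eq_integral]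
  exact integral_nonneg fun ω => mul_nonneg (sq_nonneg _) (hg ω)

lemma integral_prod_comp_sub (H : HasSpectralDensity C g) (μ : Measure E) [IsFiniteMeasure μ] :
    ∫ p : E × E, C (p.1 - p.2) ∂μ.prod μ = ∫ ω, ‖charFun μ ω‖ ^ 2 * g ω := by
  have hint : Integrable
      (fun q : (E × E) × E => cexp (I * (⟪q.1.1 - q.1.2, q.2⟫ : ℝ)) * (g q.2 : ℂ))
      ((μ.prod μ).prod volume) :=
    ((H.1.ofReal (𝕜 := ℂ)).comp_snd (μ.prod μ)).bdd_mul (c := 1)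
      (Continuous.aestronglyMeasurable (by fun_prop))
      (ae_of_all _ fun _ => (norm_exp_I_mul_ofReal_eq_one _).le)
  rw [← ofReal_inj, ← integral_complex_ofReal, ← integral_complex_ofReal]
  simp_rw [H.2]
  rw [integral_integral_swap hint]
  simp_rw [integral_mul_const, integral_prod_exp_I_mul_inner_sub, ofReal_mul]

lemma integral_norm_charFun_sq_mul_nonneg (H : HasSpectralDensity C g)
    (hC : ∀ (n : ℕ) (x : Fin n → E), 0 ≤ ∑ i, ∑ j, C (x i - x j))
    (μ : Measure E) [IsProbabilityMeasure μ] : 0 ≤ ∫ ω, ‖charFun μ ω‖ ^ 2 * g ω := by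
  rw [← H.integral_prod_comp_sub μ]
  refine integral_prod_nonneg_of_sum_sum_nonneg ?_ ?_ hC
  · exact .of_bound ((H.continuous.comp continuous_sub).aestronglyMeasurable) _
      (ae_of_all _ fun _ => H.norm_le _)
  · simp_rw [sub_self]
    exact integrable_const _

end HasSpectralDensity

lemma norm_charFun_stdGaussian_sq (t : E) :
    ‖charFun (stdGaussian E) t‖ ^ 2 = Real.exp (-‖t‖ ^ 2) := by
  have hexp : -(‖t‖ : ℂ) ^ 2 / 2 = ((-‖t‖ ^ 2 / 2 : ℝ) : ℂ) := by push_cast; rfl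
  rw [charFun_stdGaussian, hexp, norm_exp_ofReal, ← Real.exp_nat_mul]
  ring_nf

lemma integral_norm_charFun_stdGaussian_sq_pos :
    0 < ∫ t : E, ‖charFun (stdGaussian E) t‖ ^ 2 := by
  have hgauss := GaussianFourier.integral_rexp_neg_mul_sq_norm (V := E) one_pos
  simp only [neg_mul, one_mul] at hgauss
  simp_rw [norm_charFun_stdGaussian_sq, hgauss]
  positivity

namespace HasSpectralDensity

variable {C g : E → ℝ}

-- Test positive definiteness against `N(0, c² I)`: its squared characteristic functions,
-- normalized, form an approximate identity at `0` as `c → ∞`.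
lemma apply_zero_nonneg (H : HasSpectralDensity C g)
    (hC : ∀ (n : ℕ) (x : Fin n → E), 0 ≤ ∑ i, ∑ j, C (x i - x j)) (hg : ContinuousAt g 0) :
    0 ≤ g 0 := by
  set Z := ∫ t : E, ‖charFun (stdGaussian E) t‖ ^ 2
  have hZ : 0 < Z := integral_norm_charFun_stdGaussian_sq_pos
  have hpeak := tendsto_integral_comp_smul_smul_of_integrable (μ := volume)
    (φ := fun t : E => Z⁻¹ * ‖charFun (stdGaussian E) t‖ ^ 2) (fun t => by positivity)
    (by rw [integral_const_mul, inv_mul_cancel₀ hZ.ne']) ?_ H.1 hg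
  · refine ge_of_tendsto hpeak ?_
    filter_upwards [eventually_ge_atTop 0] with c hc
    have := Measure.isProbabilityMeasure_map (μ := stdGaussian E)
      (measurable_const_smul c).aemeasurable
    have hnonneg := H.integral_norm_charFun_sq_mul_nonneg hC ((stdGaussian E).map (c • ·))
    simp_rw [charFun_map_smul] at hnonneg
    simp_rw [smul_eq_mul, mul_assoc, integral_const_mul]
    positivity
  · simp_rw [norm_charFun_stdGaussian_sq, mul_left_comm _ Z⁻¹]
    simpa only [mul_zero] using
      (tendsto_norm_pow_mul_exp_neg_norm_sq_cobounded (finrank ℝ E)).const_mul Z⁻¹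

lemma nonneg_of_tendsto_nhdsNE [Nontrivial E] (H : HasSpectralDensity C g)
    (hC : ∀ (n : ℕ) (x : Fin n → E), 0 ≤ ∑ i, ∑ j, C (x i - x j)) {ℓ : ℝ}
    (hg : Tendsto g (𝓝[≠] 0) (𝓝 ℓ)) : 0 ≤ ℓ := by
  classical
  have hupdate : g =ᵐ[volume] Function.update g 0 ℓ := by
    filter_upwards [Measure.ae_ne volume (0 : E)] with ω hω
    rw [Function.update_of_ne hω]
  simpa only [Function.update_self] using
    (H.congr_ae hupdate).apply_zero_nonneg hC (continuousAt_update_same.2 hg)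

end HasSpectralDensity

end InnerProductSpace

lemma exists_pos_tendsto_nhdsGT_of_antitoneOn {f : ℝ → ℝ} {a : ℝ}
    (hmono : AntitoneOn f (Set.Ici a)) (hpos : ∃ u, a < u ∧ 0 < f u) :
    ∃ ℓ, 0 < ℓ ∧ Tendsto f (𝓝[>] a) (𝓝 ℓ) := by
  obtain ⟨u, hu, hfu⟩ := hpos
  have hbdd : BddAbove (f '' Set.Ioi a) := by
    refine ⟨f a, ?_⟩
    rintro _ ⟨v, hv, rfl⟩
    exact hmono Set.self_mem_Ici (Set.Ioi_subset_Ici_self hv) (le_of_lt hv)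
  exact ⟨sSup (f '' Set.Ioi a), hfu.trans_le (le_csSup hbdd (Set.mem_image_of_mem f hu)),
    (hmono.mono Set.Ioi_subset_Ici_self).tendsto_nhdsGT hbdd⟩

section Radial

variable {d : ℕ} {φ f : ℝ → ℝ} {b₁ b₂ s₁ s₂ : ℝ}

namespace IsRadialSpectralDensity

lemma hasSpectralDensity_mul_norm (hf : IsRadialSpectralDensity d φ f) {s : ℝ} (hs : 0 < s) :
    HasSpectralDensity (fun h : EuclideanSpace ℝ (Fin d) => φ (s * ‖h‖))
      (fun ω => (s ^ d)⁻¹ * f (s⁻¹ * ‖ω‖)) := by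
  have H : HasSpectralDensity (fun h : EuclideanSpace ℝ (Fin d) => φ ‖h‖) (fun ω => f ‖ω‖) := hf.2
  simpa only [norm_smul, norm_inv, Real.norm_of_nonneg hs.le, finrank_euclideanSpace_fin,
    abs_of_pos (pow_pos hs d)] using H.comp_smul hs.ne'

lemma hasSpectralDensity_sub (hf : IsRadialSpectralDensity d φ f) (hs₁ : 0 < s₁) (hs₂ : 0 < s₂)
    (b₁ b₂ : ℝ) :
    HasSpectralDensity
      (fun h : EuclideanSpace ℝ (Fin d) => b₁ * φ (s₁ * ‖h‖) - b₂ * φ (s₂ * ‖h‖))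
      (fun ω => b₁ * ((s₁ ^ d)⁻¹ * f (s₁⁻¹ * ‖ω‖)) - b₂ * ((s₂ ^ d)⁻¹ * f (s₂⁻¹ * ‖ω‖))) :=
  ((hf.hasSpectralDensity_mul_norm hs₁).const_mul b₁).sub
    ((hf.hasSpectralDensity_mul_norm hs₂).const_mul b₂)

lemma isStationaryCovariance_sub (hf : IsRadialSpectralDensity d φ f)
    (hmono : AntitoneOn f (Set.Ici 0)) (hs₂ : 0 < s₂) (hs : s₂ ≤ s₁) (hb₁ : 0 ≤ b₁)
    (hb : b₂ * (s₂ ^ d)⁻¹ ≤ b₁ * (s₁ ^ d)⁻¹) :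
    IsStationaryCovariance d fun h => b₁ * φ (s₁ * ‖h‖) - b₂ * φ (s₂ * ‖h‖) := by
  have hs₁ : 0 < s₁ := hs₂.trans_le hs
  intro n x v
  refine (hf.hasSpectralDensity_sub hs₁ hs₂ b₁ b₂).sum_sum_nonneg (fun ω => sub_nonneg.2 ?_) x v
  have hω₁ : 0 ≤ s₁⁻¹ * ‖ω‖ := by positivity
  have hω₂ : 0 ≤ s₂⁻¹ * ‖ω‖ := by positivity
  have hf_le : f (s₂⁻¹ * ‖ω‖) ≤ f (s₁⁻¹ * ‖ω‖) := hmono hω₁ hω₂ (by gcongr)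
  simp only [← mul_assoc]
  exact mul_le_mul hb hf_le (hf.1 _ hω₂) (by positivity)

lemma mul_inv_pow_le_of_isStationaryCovariance_sub (hf : IsRadialSpectralDensity d φ f)
    (hd : 1 ≤ d) {ℓ : ℝ} (hℓ : 0 < ℓ) (hlim : Tendsto f (𝓝[>] 0) (𝓝 ℓ))
    (hs₁ : 0 < s₁) (hs₂ : 0 < s₂)
    (hC : IsStationaryCovariance d fun h => b₁ * φ (s₁ * ‖h‖) - b₂ * φ (s₂ * ‖h‖)) :
    b₂ * (s₂ ^ d)⁻¹ ≤ b₁ * (s₁ ^ d)⁻¹ := by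
  have : Nonempty (Fin d) := ⟨⟨0, hd⟩⟩
  have hscaled {s : ℝ} (hs : 0 < s) :
      Tendsto (fun ω : EuclideanSpace ℝ (Fin d) => f (s⁻¹ * ‖ω‖)) (𝓝[≠] 0) (𝓝 ℓ) := by
    refine hlim.comp (tendsto_nhdsWithin_iff.2 ⟨?_, ?_⟩)
    · have hcont : Continuous fun ω : EuclideanSpace ℝ (Fin d) => s⁻¹ * ‖ω‖ := by fun_prop
      simpa only [norm_zero, mul_zero] using (hcont.tendsto 0).mono_left nhdsWithin_le_nhds
    · filter_upwards [self_mem_nhdsWithin] with ω hω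
      exact mul_pos (inv_pos.2 hs) (norm_pos_iff.2 hω)
  have hdensity := (((hscaled hs₁).const_mul (s₁ ^ d)⁻¹).const_mul b₁).sub
    (((hscaled hs₂).const_mul (s₂ ^ d)⁻¹).const_mul b₂)
  have hnonneg := (hf.hasSpectralDensity_sub hs₁ hs₂ b₁ b₂).nonneg_of_tendsto_nhdsNE
    (fun n x => by simpa only [one_mul] using hC n x fun _ => 1) hdensity
  rw [← mul_assoc, ← mul_assoc, sub_nonneg] at hnonneg
  exact le_of_mul_le_mul_right hnonneg hℓ

end IsRadialSpectralDensity

end Radial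

theorem statement_6_general (d : ℕ) (hd : 1 ≤ d) (φ f : ℝ → ℝ)
    (hf : IsRadialSpectralDensity d φ f)
    (hfpos : ∃ u, 0 < u ∧ 0 < f u) (hfmono : AntitoneOn f (Set.Ici 0))
    (a₁ a₂ b₁ b₂ : ℝ) (ha₂ : 0 < a₂) (ha : a₂ ≤ a₁) (hb₁ : 0 ≤ b₁) :
    IsStationaryCovariance d
      (fun h => b₁ * φ (Real.sqrt a₁ * ‖h‖) - b₂ * φ (Real.sqrt a₂ * ‖h‖)) ↔
    b₂ * (a₁ / a₂) ^ ((d : ℝ) / 2) ≤ b₁ := by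
  have ha₁ : 0 < a₁ := ha₂.trans_le ha
  have hs₁ : 0 < √a₁ := Real.sqrt_pos.2 ha₁
  have hs₂ : 0 < √a₂ := Real.sqrt_pos.2 ha₂
  have hcond : b₂ * (a₁ / a₂) ^ ((d : ℝ) / 2) ≤ b₁ ↔
      b₂ * (√a₂ ^ d)⁻¹ ≤ b₁ * (√a₁ ^ d)⁻¹ := by
    rw [Real.rpow_div_two_eq_sqrt _ (by positivity), Real.rpow_natCast, Real.sqrt_div ha₁.le,
      div_pow, ← div_eq_mul_inv b₁, le_div_iff₀ (by positivity), mul_right_comm, mul_assoc,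
      div_eq_mul_inv]
  obtain ⟨ℓ, hℓ, hlim⟩ := exists_pos_tendsto_nhdsGT_of_antitoneOn hfmono hfpos
  rw [hcond]
  exact ⟨hf.mul_inv_pow_le_of_isStationaryCovariance_sub hd hℓ hlim hs₁ hs₂,
    hf.isStationaryCovariance_sub hfmono hs₂ (Real.sqrt_le_sqrt ha) hb₁⟩

theorem statement_6 (d : ℕ) (hd : 1 ≤ d) (φ f : ℝ → ℝ)
    (hφ : MemPhi d φ) (hf : IsRadialSpectralDensity d φ f)
    (hfpos : ∀ u : ℝ, 0 ≤ u → 0 < f u) (hfmono : AntitoneOn f (Set.Ici 0))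
    (a₁ a₂ b₁ b₂ : ℝ) (ha₂ : 0 < a₂) (ha : a₂ ≤ a₁) (hb₁ : 0 ≤ b₁) (hb₂ : 0 ≤ b₂) :
    IsStationaryCovariance d
      (fun h => b₁ * φ (Real.sqrt a₁ * ‖h‖) - b₂ * φ (Real.sqrt a₂ * ‖h‖)) ↔
    b₂ * (a₁ / a₂) ^ ((d : ℝ) / 2) ≤ b₁ :=
  statement_6_general d hd φ f hf ⟨1, one_pos, hfpos 1 zero_le_one⟩ hfmono a₁ a₂ b₁ b₂ ha₂ ha hb₁
end
end

section
/- Let d ≥ 1. Let A₁, A₂ be symmetric positive definite real d×d matrices with A₁ ⪰ A₂ (i.e., A₁ − A₂ positive semidefinite), and let b₁, b₂ ≥ 0. Then the function h ↦ b₁ exp(−√(hᵀA₁h)) − b₂ exp(−√(hᵀA₂h)) is a stationary covariance function on ℝ^d if and only if b₁ ≥ b₂ (det A₁ / det A₂)^{1/2}. (This is the difference of geometrically anisotropic exponential, i.e., Matérn with shape parameter ν = 1/2, models.) -/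
open MeasureTheory
open scoped BigOperators RealInnerProductSpace

noncomputable section

/-!
The exponential is a mixture of Gaussians, `exp (-s) = ∫ exp (-(u * s) ^ 2) dν(u)`, so sufficiency
reduces to differences of Gaussians. The spectral density of `exp (-‖T h‖ ^ 2)` is proportional to
`|det T|⁻¹ * exp (-‖(T*)⁻¹ η‖ ^ 2 / 4)`; passing to `(T*)⁻¹` reverses the order of the forms, so the
spectral density of the difference is nonnegative as soon as its value at frequency `0` is.
Conversely, an integrable positive definite function has nonnegative integral, and for the
difference a linear change of variables turns this into the determinant inequality.
-/

section ChangeOfVariables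

variable {E F : Type*} [NormedAddCommGroup E] [NormedSpace ℝ E] [FiniteDimensional ℝ E]
  [MeasurableSpace E] [BorelSpace E] [NormedAddCommGroup F] (μ : Measure E) [μ.IsAddHaarMeasure]

theorem measurableEmbedding_linearEquiv (T : E ≃ₗ[ℝ] E) : MeasurableEmbedding T :=
  T.toContinuousLinearEquiv.toHomeomorph.measurableEmbedding

theorem map_linearEquiv_addHaar (T : E ≃ₗ[ℝ] E) :
    μ.map T = ENNReal.ofReal |LinearMap.det (T : E →ₗ[ℝ] E)|⁻¹ • μ := by
  rw [← abs_inv]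
  exact Measure.map_linearMap_addHaar_eq_smul_addHaar μ T.isUnit_det'.ne_zero

theorem integral_comp_linearEquiv [NormedSpace ℝ F] (T : E ≃ₗ[ℝ] E) (f : E → F) :
    ∫ x, f (T x) ∂μ = |LinearMap.det (T : E →ₗ[ℝ] E)|⁻¹ • ∫ x, f x ∂μ := by
  rw [← (measurableEmbedding_linearEquiv T).integral_map, map_linearEquiv_addHaar,
    integral_smul_measure, ENNReal.toReal_ofReal (by positivity)]

theorem integrable_comp_linearEquiv {f : E → F} (hf : Integrable f μ) (T : E ≃ₗ[ℝ] E) :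
    Integrable (fun x => f (T x)) μ := by
  refine (measurableEmbedding_linearEquiv T).integrable_map_iff.1 ?_
  rw [map_linearEquiv_addHaar]
  exact hf.smul_measure ENNReal.ofReal_ne_top

end ChangeOfVariables

section Adjoint

variable {E : Type*} [NormedAddCommGroup E] [InnerProductSpace ℝ E] [FiniteDimensional ℝ E]

theorem det_adjoint (T : E →ₗ[ℝ] E) : LinearMap.det (LinearMap.adjoint T) = LinearMap.det T := by
  let b := stdOrthonormalBasis ℝ E
  rw [← LinearMap.det_toMatrix b.toBasis, LinearMap.toMatrix_adjoint, Matrix.det_conjTranspose,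
    star_trivial, LinearMap.det_toMatrix]

/-- The inverse of the adjoint: the linear change of variable on frequencies that corresponds to
the change of variable `T` on points. -/
def adjointInv (T : E ≃ₗ[ℝ] E) : E ≃ₗ[ℝ] E :=
  LinearEquiv.ofLinearMap (LinearMap.adjoint (T.symm : E →ₗ[ℝ] E))
    (LinearMap.adjoint (T : E →ₗ[ℝ] E))
    (by rw [← LinearMap.adjoint_comp]; simp) (by rw [← LinearMap.adjoint_comp]; simp)

theorem inner_adjointInv_apply (T : E ≃ₗ[ℝ] E) (η h : E) : ⟪adjointInv T η, T h⟫ = ⟪η, h⟫ := by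
  simp [adjointInv, LinearMap.adjoint_inner_left]

theorem det_adjointInv (T : E ≃ₗ[ℝ] E) :
    LinearMap.det (adjointInv T : E →ₗ[ℝ] E) = (LinearMap.det (T : E →ₗ[ℝ] E))⁻¹ := by
  rw [← LinearEquiv.det_coe_symm]
  exact det_adjoint _

theorem norm_adjointInv_le {T₁ T₂ : E ≃ₗ[ℝ] E} (hT : ∀ h, ‖T₂ h‖ ≤ ‖T₁ h‖) (η : E) :
    ‖adjointInv T₁ η‖ ≤ ‖adjointInv T₂ η‖ := by
  obtain ⟨h, h_eq⟩ := T₁.surjective (adjointInv T₁ η)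
  have key : ‖T₁ h‖ * ‖T₁ h‖ ≤ ‖adjointInv T₂ η‖ * ‖T₁ h‖ :=
    calc ‖T₁ h‖ * ‖T₁ h‖ = ⟪adjointInv T₁ η, T₁ h⟫ := by
          rw [← h_eq, real_inner_self_eq_norm_mul_norm]
      _ = ⟪adjointInv T₂ η, T₂ h⟫ := by rw [inner_adjointInv_apply, inner_adjointInv_apply]
      _ ≤ ‖adjointInv T₂ η‖ * ‖T₂ h‖ := real_inner_le_norm _ _
      _ ≤ ‖adjointInv T₂ η‖ * ‖T₁ h‖ := by gcongr; exact hT h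
  rw [← h_eq]
  rcases (norm_nonneg (T₁ h)).eq_or_lt with hzero | hpos
  · exact hzero ▸ norm_nonneg _
  · exact le_of_mul_le_mul_right key hpos

end Adjoint

/-- Positive definiteness of a real function on an additive group, the notion of which
`IsStationaryCovariance` is the instance on `ℝ^d`. -/
def IsPositiveDefinite {G : Type*} [AddGroup G] (C : G → ℝ) : Prop :=
  ∀ (n : ℕ) (x : Fin n → G) (v : Fin n → ℝ), 0 ≤ ∑ i, ∑ j, v i * v j * C (x i - x j)

namespace IsPositiveDefinite

variable {G H : Type*} [AddGroup G] [AddGroup H]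

theorem const_mul {C : G → ℝ} (hC : IsPositiveDefinite C) {a : ℝ} (ha : 0 ≤ a) :
    IsPositiveDefinite fun h => a * C h := fun n x v => by
  simpa only [mul_left_comm _ a, ← Finset.mul_sum] using mul_nonneg ha (hC n x v)

theorem comp_addMonoidHom {C : H → ℝ} (hC : IsPositiveDefinite C) (f : G →+ H) :
    IsPositiveDefinite fun h => C (f h) := fun n x v => by
  simpa only [map_sub] using hC n (fun i => f (x i)) v

protected theorem integral {α : Type*} [MeasurableSpace α] {μ : Measure α} {C : α → G → ℝ}
    (hC : ∀ u, IsPositiveDefinite (C u)) (hint : ∀ h, Integrable (fun u => C u h) μ) :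
    IsPositiveDefinite fun h => ∫ u, C u h ∂μ := fun n x v => by
  have hterm : ∀ i j, Integrable (fun u => v i * v j * C u (x i - x j)) μ :=
    fun i j => (hint _).const_mul _
  have hsum : ∑ i, ∑ j, v i * v j * ∫ u, C u (x i - x j) ∂μ =
      ∫ u, ∑ i, ∑ j, v i * v j * C u (x i - x j) ∂μ := by
    rw [integral_finsetSum _ fun i _ => integrable_finsetSum _ fun j _ => hterm i j]
    simp_rw [integral_finsetSum _ fun j _ => hterm _ j, integral_const_mul]
  rw [hsum]
  exact integral_nonneg fun u => hC u n x v

end IsPositiveDefinite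

theorem isPositiveDefinite_cos_inner {E : Type*} [NormedAddCommGroup E] [InnerProductSpace ℝ E]
    (η : E) : IsPositiveDefinite fun h : E => Real.cos ⟪η, h⟫ := fun n x v => by
  have hsq : ∑ i, ∑ j, v i * v j * Real.cos ⟪η, x i - x j⟫ =
      (∑ i, v i * Real.cos ⟪η, x i⟫) ^ 2 + (∑ i, v i * Real.sin ⟪η, x i⟫) ^ 2 := by
    simp_rw [sq, Finset.sum_mul_sum, ← Finset.sum_add_distrib, inner_sub_right, Real.cos_sub]
    exact Finset.sum_congr rfl fun i _ => Finset.sum_congr rfl fun j _ => by ring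
  rw [hsq]
  positivity

theorem measurePreserving_eval_pair {ι α : Type*} [Fintype ι] [MeasurableSpace α] (μ : Measure α)
    [IsProbabilityMeasure μ] {i j : ι} (hij : i ≠ j) :
    MeasurePreserving (fun x : ι → α => (x i, x j)) (Measure.pi fun _ => μ) (μ.prod μ) where
  measurable := by fun_prop
  map_eq := by
    have hindep := (ProbabilityTheory.iIndepFun_pi (μ := fun _ : ι => μ) (X := fun _ => id)
      fun _ => aemeasurable_id).indepFun hij
    have heval : ∀ k : ι, (Measure.pi fun _ : ι => μ).map (fun x => x k) = μ := fun k =>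
      (measurePreserving_eval (fun _ : ι => μ) k).map_eq
    have hmap := (ProbabilityTheory.indepFun_iff_map_prod_eq_prod_map_map
      (measurable_pi_apply i).aemeasurable (measurable_pi_apply j).aemeasurable).1 hindep
    rwa [heval, heval] at hmap

theorem nonneg_of_forall_nat_mul_add_nonneg {a b : ℝ} (h : ∀ n : ℕ, 0 ≤ n * a + b) : 0 ≤ a := by
  by_contra! ha
  obtain ⟨n, hn⟩ := exists_nat_gt (b / -a)
  rw [div_lt_iff₀ (by linarith)] at hn
  linarith [h n]

-- Test positivity on `n + 1` independent points of law `μ`: the diagonal contributes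
-- `(n + 1) * C 0`, the off-diagonal terms `(n + 1) * n` times the integral.
theorem IsPositiveDefinite.integral_prod_sub_nonneg {G : Type*} [AddGroup G] [MeasurableSpace G]
    {C : G → ℝ} (hC : IsPositiveDefinite C) (μ : Measure G) [IsProbabilityMeasure μ]
    (hint : Integrable (fun p : G × G => C (p.1 - p.2)) (μ.prod μ)) :
    0 ≤ ∫ p, C (p.1 - p.2) ∂μ.prod μ := by
  set J := ∫ p, C (p.1 - p.2) ∂μ.prod μ
  refine nonneg_of_forall_nat_mul_add_nonneg (b := C 0) fun n => ?_
  let P : Measure (Fin (n + 1) → G) := Measure.pi fun _ => μ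
  have hterm : ∀ i j, Integrable (fun x : Fin (n + 1) → G => C (x i - x j)) P := fun i j => by
    rcases eq_or_ne i j with rfl | hij
    · simp
    · exact (measurePreserving_eval_pair μ hij).integrable_comp_of_integrable hint
  have hval : ∀ i j, ∫ x, C (x i - x j) ∂P = J + if i = j then C 0 - J else 0 := fun i j => by
    split_ifs with hij
    · simp [hij]
    · have hpres := measurePreserving_eval_pair μ hij
      rw [add_zero, ← integral_map (φ := fun x : Fin (n + 1) → G => (x i, x j))
        (f := fun p : G × G => C (p.1 - p.2)) hpres.aemeasurable
        (hpres.map_eq.symm ▸ hint.aestronglyMeasurable), hpres.map_eq]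
  have hsum : 0 ≤ ∫ x, ∑ i, ∑ j, C (x i - x j) ∂P :=
    integral_nonneg fun x => by simpa using hC (n + 1) x fun _ => 1
  have hexp : ∫ x, ∑ i, ∑ j, C (x i - x j) ∂P = (n + 1) * (n * J + C 0) := by
    rw [integral_finsetSum _ fun i _ => integrable_finsetSum _ fun j _ => hterm i j]
    simp_rw [integral_finsetSum _ fun j _ => hterm _ j, hval, Finset.sum_add_distrib]
    simp
    ring
  rw [hexp] at hsum
  exact nonneg_of_mul_nonneg_right hsum (by positivity)

section Autocorrelation

variable {G : Type*} [AddCommGroup G] [MeasurableSpace G] [MeasurableAdd₂ G] [MeasurableNeg G]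
  {ν : Measure G} [SFinite ν] [ν.IsAddLeftInvariant] [ν.IsNegInvariant]

theorem integrable_comp_sub_prod_of_le_smul {F : Type*} [NormedAddCommGroup F] {C : G → F}
    (hC : Integrable C ν) {μ : Measure G} [IsFiniteMeasure μ] {c : ENNReal} (hc : c ≠ ⊤)
    (hμ : μ ≤ c • ν) : Integrable (fun p : G × G => C (p.1 - p.2)) (μ.prod μ) := by
  have hν : Integrable (fun p : G × G => C (p.1 - p.2)) (μ.prod ν) := by
    simpa [Function.comp_def, neg_add_eq_sub] using (measurePreserving_prod_neg_add μ
      ν).integrable_comp_of_integrable (hC.comp_neg.comp_snd μ)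
  refine (hν.smul_measure hc).mono_measure ?_
  rw [← Measure.prod_smul_right]
  gcongr

theorem IsPositiveDefinite.integral_mul_autocorrelation_nonneg [NeZero ν] {C : G → ℝ}
    (hC : IsPositiveDefinite C) (hint : Integrable C ν) {f : G → ℝ}
    (hf : Integrable (fun x => Real.exp (f x)) ν) (hf0 : ∀ x, f x ≤ 0) :
    0 ≤ ∫ h, C h * ∫ x, Real.exp (f x) * Real.exp (f (x - h)) ∂ν ∂ν := by
  set Z := ∫ x, Real.exp (f x) ∂ν
  have hZ : 0 < Z := integral_exp_pos hf
  let μ : Measure G := ν.tilted f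
  have : IsProbabilityMeasure μ := isProbabilityMeasure_tilted hf
  have hμ : μ ≤ ENNReal.ofReal Z⁻¹ • ν := by
    rw [← withDensity_const]
    refine withDensity_mono (ae_of_all _ fun x => ENNReal.ofReal_le_ofReal ?_)
    rw [div_eq_mul_inv]
    exact mul_le_of_le_one_left (inv_nonneg.2 hZ.le) (Real.exp_le_one_iff.2 (hf0 x))
  have hμint := integrable_comp_sub_prod_of_le_smul hint ENNReal.ofReal_ne_top hμ
  have hvolint : Integrable (Function.uncurry fun x h : G =>
      Real.exp (f x) * (Real.exp (f (x - h)) * C h)) (ν.prod ν) := by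
    refine ((hint.convolution_integrand (ContinuousLinearMap.mul ℝ ℝ).flip hf).bdd_mul
      (hf.aestronglyMeasurable.comp_fst) (c := 1) (ae_of_all _ fun p => ?_))
    simpa using hf0 p.1
  have htilted : ∀ u : G → ℝ, ∫ x, u x ∂μ = Z⁻¹ * ∫ x, Real.exp (f x) * u x ∂ν := fun u => by
    rw [integral_tilted, ← integral_const_mul]
    exact integral_congr_ae (ae_of_all _ fun x => by simp only [smul_eq_mul]; ring)
  have hpair : ∫ p : G × G, C (p.1 - p.2) ∂μ.prod μ =
      Z⁻¹ ^ 2 * ∫ h, C h * ∫ x, Real.exp (f x) * Real.exp (f (x - h)) ∂ν ∂ν :=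
    calc ∫ p : G × G, C (p.1 - p.2) ∂μ.prod μ
        = Z⁻¹ ^ 2 * ∫ x, ∫ y, Real.exp (f x) * (Real.exp (f y) * C (x - y)) ∂ν ∂ν := by
          simp_rw [integral_prod _ hμint, htilted, integral_const_mul,
            mul_left_comm _ Z⁻¹, integral_const_mul, ← mul_assoc, sq]
      _ = Z⁻¹ ^ 2 * ∫ x, ∫ h, Real.exp (f x) * (Real.exp (f (x - h)) * C h) ∂ν ∂ν := by
          congr 2 with x
          simpa using integral_sub_left_eq_self
            (fun h => Real.exp (f x) * (Real.exp (f (x - h)) * C h)) ν x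
      _ = Z⁻¹ ^ 2 * ∫ h, C h * ∫ x, Real.exp (f x) * Real.exp (f (x - h)) ∂ν ∂ν := by
          simp_rw [integral_integral_swap hvolint, ← mul_assoc, integral_mul_const, mul_comm]
  have hnonneg := hC.integral_prod_sub_nonneg μ hμint
  rw [hpair] at hnonneg
  exact nonneg_of_mul_nonneg_right hnonneg (by positivity)

end Autocorrelation

section Euclidean

variable {E : Type*} [NormedAddCommGroup E] [InnerProductSpace ℝ E] [FiniteDimensional ℝ E]
  [MeasurableSpace E] [BorelSpace E]

theorem integrable_exp_neg_mul_norm_sq {t : ℝ} (ht : 0 < t) :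
    Integrable fun x : E => Real.exp (-(t * ‖x‖ ^ 2)) := by
  refine (GaussianFourier.integrable_cexp_neg_mul_sq_norm_add (V := E) (b := (t : ℂ))
    (by simpa using ht) 0 0).norm.congr (ae_of_all _ fun x => ?_)
  simp [Complex.norm_exp, ← Complex.ofReal_pow]

theorem integral_exp_neg_norm_sq_mul_cos_inner (h : E) :
    ∫ ω : E, Real.exp (-(1 / 4 * ‖ω‖ ^ 2)) * Real.cos ⟪ω, h⟫ =
      (4 * Real.pi) ^ ((Module.finrank ℝ E : ℝ) / 2) * Real.exp (-‖h‖ ^ 2) := by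
  have hb : 0 < ((1 / 4 : ℝ) : ℂ).re := by norm_num
  have hre : ∀ ω : E, Real.exp (-(1 / 4 * ‖ω‖ ^ 2)) * Real.cos ⟪ω, h⟫ =
      RCLike.re (Complex.exp (-((1 / 4 : ℝ) : ℂ) * ‖ω‖ ^ 2 + Complex.I * ⟪h, ω⟫)) := fun ω => by
    rw [RCLike.re_eq_complex_re, Complex.exp_re, real_inner_comm]
    simp [← Complex.ofReal_pow]
  have hval : ((Real.pi : ℂ) / ((1 / 4 : ℝ) : ℂ)) ^ ((Module.finrank ℝ E : ℂ) / 2) *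
      Complex.exp (Complex.I ^ 2 * ‖h‖ ^ 2 / (4 * ((1 / 4 : ℝ) : ℂ))) =
      (((4 * Real.pi) ^ ((Module.finrank ℝ E : ℝ) / 2) * Real.exp (-‖h‖ ^ 2) : ℝ) : ℂ) := by
    rw [Complex.ofReal_mul, Complex.ofReal_cpow (by positivity)]
    push_cast
    simp [mul_comm]
  simp_rw [hre]
  rw [integral_re (GaussianFourier.integrable_cexp_neg_mul_sq_norm_add hb Complex.I h),
    GaussianFourier.integral_cexp_neg_mul_sq_norm_add hb, hval]
  exact Complex.ofReal_re _

theorem integrable_exp_neg_norm_sq_mul_cos_inner (R : E ≃ₗ[ℝ] E) (h : E) :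
    Integrable fun η : E => Real.exp (-(1 / 4 * ‖R η‖ ^ 2)) * Real.cos ⟪η, h⟫ := by
  refine (integrable_comp_linearEquiv volume
    (integrable_exp_neg_mul_norm_sq (by norm_num : (0 : ℝ) < 1 / 4)) R).mul_bdd (c := 1)
    (by fun_prop) (ae_of_all _ fun η => ?_)
  exact Real.abs_cos_le_one _

theorem integral_exp_neg_norm_adjointInv_sq_mul_cos_inner (T : E ≃ₗ[ℝ] E) (h : E) :
    ∫ η : E, Real.exp (-(1 / 4 * ‖adjointInv T η‖ ^ 2)) * Real.cos ⟪η, h⟫ =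
      (4 * Real.pi) ^ ((Module.finrank ℝ E : ℝ) / 2) *
        (|LinearMap.det (T : E →ₗ[ℝ] E)| * Real.exp (-‖T h‖ ^ 2)) := by
  have hcomp := integral_comp_linearEquiv volume (adjointInv T)
    fun ω => Real.exp (-(1 / 4 * ‖ω‖ ^ 2)) * Real.cos ⟪ω, T h⟫
  simp only [inner_adjointInv_apply] at hcomp
  rw [hcomp, integral_exp_neg_norm_sq_mul_cos_inner, det_adjointInv, abs_inv, inv_inv, smul_eq_mul]
  ring

theorem isPositiveDefinite_exp_neg_norm_sq_sub {T₁ T₂ : E ≃ₗ[ℝ] E}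
    (hT : ∀ h, ‖T₂ h‖ ≤ ‖T₁ h‖) {b₁ b₂ : ℝ} (hb₂ : 0 ≤ b₂)
    (hb : b₂ / |LinearMap.det (T₂ : E →ₗ[ℝ] E)| ≤ b₁ / |LinearMap.det (T₁ : E →ₗ[ℝ] E)|) :
    IsPositiveDefinite fun h => b₁ * Real.exp (-‖T₁ h‖ ^ 2) - b₂ * Real.exp (-‖T₂ h‖ ^ 2) := by
  set D₁ := |LinearMap.det (T₁ : E →ₗ[ℝ] E)| with hD₁
  set D₂ := |LinearMap.det (T₂ : E →ₗ[ℝ] E)| with hD₂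
  have hD₁0 : D₁ ≠ 0 := abs_ne_zero.2 T₁.isUnit_det'.ne_zero
  have hD₂0 : D₂ ≠ 0 := abs_ne_zero.2 T₂.isUnit_det'.ne_zero
  let f (T : E ≃ₗ[ℝ] E) (η : E) : ℝ := Real.exp (-(1 / 4 * ‖adjointInv T η‖ ^ 2))
  let w (η : E) : ℝ := b₁ / D₁ * f T₁ η - b₂ / D₂ * f T₂ η
  have hw : ∀ η, 0 ≤ w η := fun η => by
    have hf : f T₂ η ≤ f T₁ η := by
      simp only [f]
      gcongr
      exact norm_adjointInv_le hT η
    have hb₂' : 0 ≤ b₂ / D₂ := by positivity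
    exact sub_nonneg.2 (mul_le_mul hb hf (Real.exp_pos _).le (hb₂'.trans hb))
  have hi : ∀ (T : E ≃ₗ[ℝ] E) (c : ℝ) (h : E),
      Integrable fun η => c * (f T η * Real.cos ⟪η, h⟫) := fun T c h =>
    (integrable_exp_neg_norm_sq_mul_cos_inner _ h).const_mul c
  have hwcos : ∀ η h, w η * Real.cos ⟪η, h⟫ =
      b₁ / D₁ * (f T₁ η * Real.cos ⟪η, h⟫) - b₂ / D₂ * (f T₂ η * Real.cos ⟪η, h⟫) :=
    fun η h => by ring
  have hpd : IsPositiveDefinite fun h => ∫ η, w η * Real.cos ⟪η, h⟫ :=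
    .integral (fun η => (isPositiveDefinite_cos_inner η).const_mul (hw η)) fun h => by
      simp only [hwcos]
      exact (hi T₁ _ h).sub (hi T₂ _ h)
  set K : ℝ := (4 * Real.pi) ^ ((Module.finrank ℝ E : ℝ) / 2) with hK
  have hK0 : 0 < K := by positivity
  convert! hpd.const_mul (inv_nonneg.2 hK0.le) using 2 with h
  simp_rw [hwcos]
  rw [integral_sub (hi T₁ _ h) (hi T₂ _ h), integral_const_mul, integral_const_mul,
    integral_exp_neg_norm_adjointInv_sq_mul_cos_inner,
    integral_exp_neg_norm_adjointInv_sq_mul_cos_inner, ← hD₁, ← hD₂, ← hK]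
  field_simp

theorem integral_exp_neg_norm_sq_mul_exp_neg_norm_sub_sq (t : ℝ) (h : E) :
    ∫ x : E, Real.exp (-(2 * t * ‖x‖ ^ 2)) * Real.exp (-(2 * t * ‖x - h‖ ^ 2)) =
      Real.exp (-(t * ‖h‖ ^ 2)) * ∫ x : E, Real.exp (-(4 * t * ‖x‖ ^ 2)) := by
  have hsq : ∀ x : E, 2 * t * ‖x‖ ^ 2 + 2 * t * ‖x - h‖ ^ 2 =
      t * ‖h‖ ^ 2 + 4 * t * ‖x - (2⁻¹ : ℝ) • h‖ ^ 2 := fun x => by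
    rw [norm_sub_sq_real, norm_sub_sq_real, inner_smul_right, norm_smul, mul_pow, Real.norm_eq_abs,
      sq_abs]
    ring
  simp_rw [← Real.exp_add, ← neg_add, hsq, neg_add, Real.exp_add, integral_const_mul]
  rw [integral_sub_right_eq_self fun x : E => Real.exp (-(4 * t * ‖x‖ ^ 2))]

theorem IsPositiveDefinite.integral_mul_exp_neg_norm_sq_nonneg {C : E → ℝ}
    (hC : IsPositiveDefinite C) (hint : Integrable C) {t : ℝ} (ht : 0 < t) :
    0 ≤ ∫ h, C h * Real.exp (-(t * ‖h‖ ^ 2)) := by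
  have hauto := hC.integral_mul_autocorrelation_nonneg hint
    (integrable_exp_neg_mul_norm_sq (by positivity : 0 < 2 * t))
    fun x => neg_nonpos.2 (by positivity)
  simp_rw [integral_exp_neg_norm_sq_mul_exp_neg_norm_sub_sq, ← mul_assoc, integral_mul_const]
    at hauto
  exact nonneg_of_mul_nonneg_left hauto
    (integral_exp_pos (integrable_exp_neg_mul_norm_sq (by positivity)))

protected theorem IsPositiveDefinite.integral_nonneg {C : E → ℝ} (hC : IsPositiveDefinite C)
    (hint : Integrable C) : 0 ≤ ∫ h, C h := by
  have hlim : Filter.Tendsto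
      (fun n : ℕ => ∫ h, C h * Real.exp (-(1 / ((n : ℝ) + 1) * ‖h‖ ^ 2))) Filter.atTop
      (nhds (∫ h, C h)) := by
    refine tendsto_integral_of_dominated_convergence (fun h => |C h|)
      (fun n => hint.aestronglyMeasurable.mul (Continuous.aestronglyMeasurable (by fun_prop)))
      hint.abs (fun n => ae_of_all _ fun h => ?_) (ae_of_all _ fun h => ?_)
    · rw [norm_mul, Real.norm_eq_abs, Real.norm_eq_abs, Real.abs_exp]
      exact mul_le_of_le_one_right (abs_nonneg _)
        (Real.exp_le_one_iff.2 (neg_nonpos.2 (by positivity)))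
    · have hcont : Continuous fun t : ℝ => C h * Real.exp (-(t * ‖h‖ ^ 2)) := by fun_prop
      simpa [Function.comp_def] using
        (hcont.tendsto 0).comp (tendsto_one_div_add_atTop_nhds_zero_nat (𝕜 := ℝ))
  exact ge_of_tendsto' hlim fun n =>
    hC.integral_mul_exp_neg_norm_sq_nonneg hint (by positivity)

end Euclidean

section CauchySchlomilch

variable {F : Type*} [NormedAddCommGroup F] [NormedSpace ℝ F] {c : ℝ}

theorem hasDerivAt_const_div {x : ℝ} (hx : x ≠ 0) :
    HasDerivAt (fun x => c / x) (-(c / x ^ 2)) x := by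
  simpa [neg_div] using (hasDerivAt_const x c).fun_div (hasDerivAt_id x) hx

theorem hasDerivAt_sub_const_div {x : ℝ} (hx : x ≠ 0) :
    HasDerivAt (fun x => x - c / x) (1 + c / x ^ 2) x := by
  simpa using (hasDerivAt_id' x).fun_sub (hasDerivAt_const_div hx)

theorem injOn_sub_const_div (hc : 0 ≤ c) : Set.InjOn (fun x => x - c / x) (Set.Ioi 0) := by
  refine StrictMonoOn.injOn fun x hx y _ hxy => ?_
  rw [Set.mem_Ioi] at hx
  have hdiv : c / y ≤ c / x := by gcongr
  change x - c / x < y - c / y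
  linarith

theorem image_const_div_Ioi (hc : 0 < c) : (fun x => c / x) '' Set.Ioi 0 = Set.Ioi 0 := by
  ext y
  refine ⟨?_, fun hy => ⟨c / y, div_pos hc hy, div_div_cancel₀ hc.ne'⟩⟩
  rintro ⟨x, hx, rfl⟩
  exact div_pos hc hx

theorem image_sub_const_div_Ioi (hc : 0 < c) :
    (fun x => x - c / x) '' Set.Ioi 0 = Set.univ := by
  refine Set.eq_univ_of_forall fun y => ?_
  have hsq : √(y ^ 2 + 4 * c) ^ 2 = y ^ 2 + 4 * c := Real.sq_sqrt (by positivity)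
  have habs : |y| < √(y ^ 2 + 4 * c) := Real.lt_sqrt_of_sq_lt (by rw [sq_abs]; linarith)
  have hpos : 0 < (y + √(y ^ 2 + 4 * c)) / 2 := by linarith [neg_abs_le y]
  refine ⟨_, hpos, ?_⟩
  rw [sub_eq_iff_eq_add, ← sub_eq_iff_eq_add', eq_div_iff hpos.ne']
  linarith

theorem integral_const_div_sq_smul_comp_const_div (hc : 0 < c) (g : ℝ → F) :
    ∫ x in Set.Ioi 0, (c / x ^ 2) • g (c / x) = ∫ x in Set.Ioi 0, g x := by
  have hsub := integral_image_eq_integral_abs_deriv_smul measurableSet_Ioi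
    (fun x (hx : 0 < x) => (hasDerivAt_const_div (c := c) hx.ne').hasDerivWithinAt)
    (fun x _ y _ hxy => by simpa [div_eq_mul_inv, hc.ne'] using hxy) g
  simpa [image_const_div_Ioi hc, abs_div, abs_of_pos hc] using hsub.symm

theorem abs_one_add_div_sq (hc : 0 ≤ c) (x : ℝ) : |1 + c / x ^ 2| = 1 + c / x ^ 2 :=
  abs_of_nonneg (by positivity)

theorem integrableOn_one_add_smul_comp_sub_const_div (hc : 0 < c) {g : ℝ → F}
    (hg : Integrable g) :
    IntegrableOn (fun x => (1 + c / x ^ 2) • g (x - c / x)) (Set.Ioi 0) := by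
  have hint := integrableOn_image_iff_integrableOn_abs_deriv_smul measurableSet_Ioi
    (fun _ hx => (hasDerivAt_sub_const_div (ne_of_gt hx)).hasDerivWithinAt)
    (injOn_sub_const_div hc.le) g
  simp only [image_sub_const_div_Ioi hc, integrableOn_univ, abs_one_add_div_sq hc.le] at hint
  exact hint.1 hg

theorem integral_one_add_smul_comp_sub_const_div (hc : 0 < c) (g : ℝ → F) :
    ∫ x in Set.Ioi 0, (1 + c / x ^ 2) • g (x - c / x) = ∫ x, g x := by
  have hval := integral_image_eq_integral_abs_deriv_smul measurableSet_Ioi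
    (fun _ hx => (hasDerivAt_sub_const_div (ne_of_gt hx)).hasDerivWithinAt)
    (injOn_sub_const_div hc.le) g
  simp only [image_sub_const_div_Ioi hc, setIntegral_univ, abs_one_add_div_sq hc.le] at hval
  exact hval.symm

theorem integral_comp_sub_const_div (hc : 0 < c) {g : ℝ → F} (hg : Integrable g)
    (heven : ∀ x, g (-x) = g x) :
    ∫ x in Set.Ioi 0, g (x - c / x) = (2⁻¹ : ℝ) • ∫ x, g x := by
  have hint := integrableOn_one_add_smul_comp_sub_const_div hc hg
  have hval := integral_one_add_smul_comp_sub_const_div hc g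
  have hk : IntegrableOn (fun x => g (x - c / x)) (Set.Ioi 0) := by
    have hbdd : ∀ x, ‖(1 + c / x ^ 2)⁻¹‖ ≤ 1 := fun x => by
      rw [norm_inv, Real.norm_eq_abs, abs_one_add_div_sq hc.le]
      exact inv_le_one_of_one_le₀ (le_add_of_nonneg_right (by positivity))
    refine IntegrableOn.congr_fun (hint.bdd_smul (φ := fun x => (1 + c / x ^ 2)⁻¹) (C := 1)
      (Measurable.aestronglyMeasurable (by fun_prop)) (ae_of_all _ hbdd)) (fun x _ => ?_)
      measurableSet_Ioi
    exact inv_smul_smul₀ (by positivity) _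
  -- The substitution `x ↦ c / x` changes the sign of `x - c / x`.
  have hsymm : ∫ x in Set.Ioi 0, (c / x ^ 2) • g (x - c / x) = ∫ x in Set.Ioi 0, g (x - c / x) := by
    rw [← integral_const_div_sq_smul_comp_const_div hc fun x => g (x - c / x)]
    refine setIntegral_congr_fun measurableSet_Ioi fun x _ => ?_
    simp only [div_div_cancel₀ hc.ne']
    rw [← heven, neg_sub]
  have hrest : IntegrableOn (fun x => (c / x ^ 2) • g (x - c / x)) (Set.Ioi 0) := by
    simpa [add_smul, Pi.sub_def] using hint.sub hk
  simp only [add_smul, one_smul] at hval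
  rw [integral_add hk hrest, hsymm, ← two_smul ℝ] at hval
  rw [← hval, inv_smul_smul₀ two_ne_zero]

end CauchySchlomilch

theorem integral_exp_neg_sq_mul_exp_neg_div_sq {s : ℝ} (hs : 0 ≤ s) :
    ∫ x : ℝ, Real.exp (-x ^ 2) * Real.exp (-(s / (2 * x)) ^ 2) = √Real.pi * Real.exp (-s) := by
  have hgauss : ∫ x : ℝ, Real.exp (-x ^ 2) = √Real.pi := by simpa using integral_gaussian 1
  rcases hs.eq_or_lt with rfl | hs
  · simpa using hgauss
  have hint : Integrable fun x : ℝ => Real.exp (-x ^ 2) := by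
    simpa using integrable_exp_neg_mul_sq one_pos
  have hsq : ∀ x ∈ Set.Ioi (0 : ℝ), Real.exp (-x ^ 2) * Real.exp (-(s / (2 * x)) ^ 2) =
      Real.exp (-s) * Real.exp (-(x - s / 2 / x) ^ 2) := fun x hx => by
    have hx0 : x ≠ 0 := ne_of_gt hx
    rw [← Real.exp_add, ← Real.exp_add]
    congr 1
    field_simp
    ring
  calc ∫ x : ℝ, Real.exp (-x ^ 2) * Real.exp (-(s / (2 * x)) ^ 2)
      = 2 * ∫ x in Set.Ioi 0, Real.exp (-x ^ 2) * Real.exp (-(s / (2 * x)) ^ 2) := by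
        rw [← integral_comp_abs]
        simp [div_pow, mul_pow]
    _ = 2 * (Real.exp (-s) * ∫ x in Set.Ioi 0, Real.exp (-(x - s / 2 / x) ^ 2)) := by
        rw [setIntegral_congr_fun measurableSet_Ioi hsq, integral_const_mul]
    _ = √Real.pi * Real.exp (-s) := by
        rw [integral_comp_sub_const_div (half_pos hs) hint (by simp), hgauss, smul_eq_mul]
        ring

/-- Scale mixtures of Gaussians `s ↦ exp (-(u * s) ^ 2)` over a finite mixing measure on the
scale `u`, as functions on `[0, ∞)`. By Schoenberg's theorem these are the continuous radial
profiles that are positive definite in every dimension. -/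
def IsGaussianScaleMixture (φ : ℝ → ℝ) : Prop :=
  ∃ ν : Measure ℝ, IsFiniteMeasure ν ∧
    ∀ s, 0 ≤ s → φ s = ∫ u, Real.exp (-(u * s) ^ 2) ∂ν

theorem integrable_exp_neg_mul_sq_of_isFiniteMeasure (ν : Measure ℝ) [IsFiniteMeasure ν] (s : ℝ) :
    Integrable (fun u => Real.exp (-(u * s) ^ 2)) ν :=
  .of_bound (Continuous.aestronglyMeasurable (by fun_prop)) 1 (ae_of_all _ fun u => by
    simpa using sq_nonneg (u * s))

theorem isGaussianScaleMixture_exp_neg : IsGaussianScaleMixture fun s => Real.exp (-s) := by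
  refine ⟨(ProbabilityTheory.gaussianReal 0 (1 / 2)).map fun x => (2 * x)⁻¹,
    inferInstance, fun s hs => ?_⟩
  have hpdf : ∀ x, ProbabilityTheory.gaussianPDFReal 0 (1 / 2) x =
      (√Real.pi)⁻¹ * Real.exp (-x ^ 2) := fun x => by
    have hsqrt : √2 * ((√Real.pi)⁻¹ * (√2)⁻¹) = (√Real.pi)⁻¹ := by field_simp
    simp [ProbabilityTheory.gaussianPDFReal, hsqrt]
  rw [integral_map (by fun_prop) (by fun_prop),
    ProbabilityTheory.integral_gaussianReal_eq_integral_smul (by norm_num)]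
  simp only [hpdf, smul_eq_mul, mul_assoc, integral_const_mul, inv_mul_eq_div _ s]
  rw [integral_exp_neg_sq_mul_exp_neg_div_sq hs]
  field_simp

namespace IsGaussianScaleMixture

variable {φ : ℝ → ℝ}

theorem pos (hφ : IsGaussianScaleMixture φ) (hφ0 : φ 0 ≠ 0) {s : ℝ} (hs : 0 ≤ s) : 0 < φ s := by
  obtain ⟨ν, _, hν⟩ := hφ
  have hν0 : NeZero ν := ⟨fun h => hφ0 (by simp [hν 0 le_rfl, h])⟩
  rw [hν s hs]
  exact integral_exp_pos (integrable_exp_neg_mul_sq_of_isFiniteMeasure ν s)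

theorem integral_norm_pos (hφ : IsGaussianScaleMixture φ) (hφ0 : φ 0 ≠ 0) {E : Type*}
    [SeminormedAddGroup E] [MeasurableSpace E] {μ : Measure E} [NeZero μ]
    (hint : Integrable (fun h => φ ‖h‖) μ) : 0 < ∫ h, φ ‖h‖ ∂μ := by
  have hpos : ∀ h : E, 0 < φ ‖h‖ := fun h => hφ.pos hφ0 (norm_nonneg h)
  have hsupp : Function.support (fun h : E => φ ‖h‖) = Set.univ :=
    Set.eq_univ_of_forall fun h => (hpos h).ne'
  rw [integral_pos_iff_support_of_nonneg (fun h => (hpos h).le) hint, hsupp]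
  exact NeZero.pos _

end IsGaussianScaleMixture

section Radial

variable {E : Type*} [NormedAddCommGroup E] [InnerProductSpace ℝ E] [FiniteDimensional ℝ E]
  [MeasurableSpace E] [BorelSpace E] {φ : ℝ → ℝ} {T₁ T₂ : E ≃ₗ[ℝ] E} {b₁ b₂ : ℝ}

theorem IsGaussianScaleMixture.isPositiveDefinite_sub (hφ : IsGaussianScaleMixture φ)
    (hT : ∀ h, ‖T₂ h‖ ≤ ‖T₁ h‖) (hb₂ : 0 ≤ b₂)
    (hb : b₂ / |LinearMap.det (T₂ : E →ₗ[ℝ] E)| ≤ b₁ / |LinearMap.det (T₁ : E →ₗ[ℝ] E)|) :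
    IsPositiveDefinite fun h => b₁ * φ ‖T₁ h‖ - b₂ * φ ‖T₂ h‖ := by
  obtain ⟨ν, _, hν⟩ := hφ
  have hi : ∀ (b : ℝ) (T : E ≃ₗ[ℝ] E) (h : E),
      Integrable (fun u => b * Real.exp (-(u * ‖T h‖) ^ 2)) ν := fun b T h =>
    (integrable_exp_neg_mul_sq_of_isFiniteMeasure ν _).const_mul b
  have hmix : (fun h => b₁ * φ ‖T₁ h‖ - b₂ * φ ‖T₂ h‖) = fun h =>
      ∫ u, (b₁ * Real.exp (-(u * ‖T₁ h‖) ^ 2) - b₂ * Real.exp (-(u * ‖T₂ h‖) ^ 2)) ∂ν := by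
    funext h
    rw [hν _ (norm_nonneg _), hν _ (norm_nonneg _), integral_sub (hi b₁ T₁ h) (hi b₂ T₂ h),
      integral_const_mul, integral_const_mul]
  rw [hmix]
  refine .integral (fun u => ?_) fun h => (hi b₁ T₁ h).sub (hi b₂ T₂ h)
  simpa [norm_smul, mul_pow] using (isPositiveDefinite_exp_neg_norm_sq_sub hT hb₂ hb)
    |>.comp_addMonoidHom (DistribSMul.toAddMonoidHom E u)

theorem IsPositiveDefinite.div_abs_det_le
    (hC : IsPositiveDefinite fun h => b₁ * φ ‖T₁ h‖ - b₂ * φ ‖T₂ h‖)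
    (hint : Integrable fun h : E => φ ‖h‖) (hpos : 0 < ∫ h : E, φ ‖h‖) :
    b₂ / |LinearMap.det (T₂ : E →ₗ[ℝ] E)| ≤ b₁ / |LinearMap.det (T₁ : E →ₗ[ℝ] E)| := by
  have hi : ∀ (b : ℝ) (T : E ≃ₗ[ℝ] E), Integrable fun h => b * φ ‖T h‖ := fun b T =>
    (integrable_comp_linearEquiv volume hint T).const_mul b
  have hval : ∀ (b : ℝ) (T : E ≃ₗ[ℝ] E), ∫ h, b * φ ‖T h‖ =
      b / |LinearMap.det (T : E →ₗ[ℝ] E)| * ∫ h : E, φ ‖h‖ := fun b T => by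
    rw [integral_const_mul, integral_comp_linearEquiv volume T fun x => φ ‖x‖, smul_eq_mul,
      div_eq_mul_inv, mul_assoc]
  have hnonneg := hC.integral_nonneg ((hi b₁ T₁).sub (hi b₂ T₂))
  rw [integral_sub (hi b₁ T₁) (hi b₂ T₂), hval, hval, sub_nonneg] at hnonneg
  exact le_of_mul_le_mul_right hnonneg hpos

end Radial

theorem integrable_exp_neg_norm {E : Type*} [NormedAddCommGroup E] [NormedSpace ℝ E]
    [FiniteDimensional ℝ E] [Nontrivial E] [MeasurableSpace E] [BorelSpace E] (μ : Measure E)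
    [μ.IsAddHaarMeasure] : Integrable (fun h => Real.exp (-‖h‖)) μ := by
  rw [integrable_fun_norm_addHaar μ (f := fun r => Real.exp (-r))]
  refine (Real.GammaIntegral_convergent (s := Module.finrank ℝ E)
    (by exact_mod_cast Module.finrank_pos)).congr_fun (fun r _ => ?_) measurableSet_Ioi
  have hcast : (Module.finrank ℝ E : ℝ) - 1 = (Module.finrank ℝ E - 1 : ℕ) := by
    rw [Nat.cast_pred Module.finrank_pos]
  simp only [hcast, Real.rpow_natCast, smul_eq_mul, mul_comm]

section QuadForm

variable {d : ℕ}

theorem quadForm_eq_dotProduct_mulVec (A : Matrix (Fin d) (Fin d) ℝ)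
    (h : EuclideanSpace ℝ (Fin d)) : quadForm A h = h.ofLp ⬝ᵥ A.mulVec h.ofLp := by
  simp only [quadForm, dotProduct, Matrix.mulVec, Finset.mul_sum, mul_assoc]

theorem quadForm_le_quadForm {A B : Matrix (Fin d) (Fin d) ℝ} (hAB : (A - B).PosSemidef)
    (h : EuclideanSpace ℝ (Fin d)) : quadForm B h ≤ quadForm A h := by
  have hsub := hAB.dotProduct_mulVec_nonneg h.ofLp
  rwa [star_trivial, Matrix.sub_mulVec, dotProduct_sub, ← quadForm_eq_dotProduct_mulVec,
    ← quadForm_eq_dotProduct_mulVec, sub_nonneg] at hsub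

theorem sqrt_quadForm_star_mul_self (M : Matrix (Fin d) (Fin d) ℝ)
    (h : EuclideanSpace ℝ (Fin d)) : √(quadForm (star M * M) h) = ‖Matrix.toEuclideanLin M h‖ := by
  rw [quadForm_eq_dotProduct_mulVec, ← Matrix.mulVec_mulVec, Matrix.dotProduct_mulVec,
    Matrix.star_eq_conjTranspose, Matrix.vecMul_conjTranspose, EuclideanSpace.norm_eq]
  simp [dotProduct, Matrix.toLpLin_apply, sq]

theorem exists_linearEquiv_of_posDef {A : Matrix (Fin d) (Fin d) ℝ} (hA : A.PosDef) :
    ∃ T : EuclideanSpace ℝ (Fin d) ≃ₗ[ℝ] EuclideanSpace ℝ (Fin d),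
      (∀ h, √(quadForm A h) = ‖T h‖) ∧
      |LinearMap.det (T : EuclideanSpace ℝ (Fin d) →ₗ[ℝ] EuclideanSpace ℝ (Fin d))| = √A.det := by
  obtain ⟨M, rfl⟩ : ∃ M : Matrix (Fin d) (Fin d) ℝ, A = star M * M := by
    open scoped MatrixOrder in
    exact CStarAlgebra.nonneg_iff_eq_star_mul_self.1 hA.posSemidef.nonneg
  have hdet : (star M * M).det = M.det ^ 2 := by
    rw [Matrix.det_mul, Matrix.star_eq_conjTranspose, Matrix.det_conjTranspose, star_trivial, sq]
  have hdet0 : LinearMap.det (Matrix.toEuclideanLin M) ≠ 0 := by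
    rw [LinearMap.det_toLpLin]
    exact fun h => hA.det_pos.ne' (by rw [hdet, h, sq, zero_mul])
  refine ⟨LinearMap.equivOfDetNeZero _ hdet0, sqrt_quadForm_star_mul_self M, ?_⟩
  rw [hdet, Real.sqrt_sq_eq_abs]
  exact congrArg abs (LinearMap.det_toLpLin _ _)

end QuadForm

theorem statement_19_general (d : ℕ) {A₁ A₂ : Matrix (Fin d) (Fin d) ℝ} (hA₁ : A₁.PosDef)
    (hA₂ : A₂.PosDef) (hA₁₂ : (A₁ - A₂).PosSemidef) {φ : ℝ → ℝ} (hφ : IsGaussianScaleMixture φ)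
    (hφ0 : φ 0 ≠ 0) (hint : Integrable fun h : EuclideanSpace ℝ (Fin d) => φ ‖h‖)
    {b₁ b₂ : ℝ} (hb₂ : 0 ≤ b₂) :
    IsStationaryCovariance d
      (fun h => b₁ * φ (√(quadForm A₁ h)) - b₂ * φ (√(quadForm A₂ h))) ↔
    b₂ * √(A₁.det / A₂.det) ≤ b₁ := by
  obtain ⟨T₁, hT₁, hdet₁⟩ := exists_linearEquiv_of_posDef hA₁
  obtain ⟨T₂, hT₂, hdet₂⟩ := exists_linearEquiv_of_posDef hA₂
  have hT : ∀ h, ‖T₂ h‖ ≤ ‖T₁ h‖ := fun h => by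
    rw [← hT₁, ← hT₂]
    exact Real.sqrt_le_sqrt (quadForm_le_quadForm hA₁₂ h)
  have hbound : b₂ * √(A₁.det / A₂.det) ≤ b₁ ↔
      b₂ / |LinearMap.det (T₂ : EuclideanSpace ℝ (Fin d) →ₗ[ℝ] EuclideanSpace ℝ (Fin d))| ≤
        b₁ / |LinearMap.det (T₁ : EuclideanSpace ℝ (Fin d) →ₗ[ℝ] EuclideanSpace ℝ (Fin d))| := by
    rw [hdet₁, hdet₂, le_div_iff₀ (Real.sqrt_pos.2 hA₁.det_pos), Real.sqrt_div hA₁.det_pos.le,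
      div_mul_eq_mul_div, mul_div_assoc]
  simp only [hT₁, hT₂, hbound]
  exact ⟨fun hC => IsPositiveDefinite.div_abs_det_le hC hint (hφ.integral_norm_pos hφ0 hint),
    hφ.isPositiveDefinite_sub hT hb₂⟩

theorem statement_19 (d : ℕ) (hd : 1 ≤ d)
    (A₁ A₂ : Matrix (Fin d) (Fin d) ℝ) (hA₁ : A₁.PosDef) (hA₂ : A₂.PosDef)
    (hA₁₂ : (A₁ - A₂).PosSemidef)
    (b₁ b₂ : ℝ) (hb₁ : 0 ≤ b₁) (hb₂ : 0 ≤ b₂) :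
    IsStationaryCovariance d
      (fun h => b₁ * Real.exp (-Real.sqrt (quadForm A₁ h)) -
        b₂ * Real.exp (-Real.sqrt (quadForm A₂ h))) ↔
    b₂ * Real.sqrt (A₁.det / A₂.det) ≤ b₁ := by
  have : NeZero d := ⟨by lia⟩
  exact statement_19_general d hA₁ hA₂ hA₁₂ isGaussianScaleMixture_exp_neg (Real.exp_ne_zero _)
    (integrable_exp_neg_norm volume) hb₂
end
end
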